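/- Let F be a field of characteristic zero, V a finite-dimensional F-vector space, N a nilpotent endomorphism of V, and W the weight filtration centered at w ∈ ℤ associated to N. For every integer j > 0, let N^{(∧j)} be the unique endomorphism of ∧^j V satisfying N^{(∧j)}(v₁ ∧ ⋯ ∧ v_j) = Σ_{k=1}^{j} v₁ ∧ ⋯ ∧ N(v_k) ∧ ⋯ ∧ v_j. Then N^{(∧j)} is nilpotent and the weight filtration on ∧^j V centered at w·j associated to N^{(∧j)} is the exterior power filtration ∧^j W, defined by (∧^j W)_i = Σ_{i₁+⋯+i_j=i} W_{i₁} ∧ ⋯ ∧ W_{i_j} (the span of wedges v₁ ∧ ⋯ ∧ v_j with v_k ∈ W_{i_k}). -/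

import Mathlib

/-- `W` is an ascending filtration on `V`, exhaustive and separated, which is the weight
filtration centered at `w` associated to the nilpotent endomorphism `N`. -/
def IsWeightFiltration {F V : Type*} [Field F] [AddCommGroup V] [Module F V]
    (N : V →ₗ[F] V) (w : ℤ) (W : ℤ → Submodule F V) : Prop :=
  Monotone W ∧
  (∃ a : ℤ, ∀ i ≤ a, W i = ⊥) ∧
  (∃ b : ℤ, ∀ i, b ≤ i → W i = ⊤) ∧
  (∀ i : ℤ, (W i).map N ≤ W (i - 2)) ∧
  (∀ α : ℤ, 0 < α →
    W (w - α) ≤ W (w - α - 1) ⊔ (W (w + α)).map (N ^ α.toNat) ∧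
    ∀ v ∈ W (w + α), (N ^ α.toNat) v ∈ W (w - α - 1) → v ∈ W (w + α - 1))

/-- The wedge `v₁ ∧ ⋯ ∧ v_j`, as an element of the `j`-th exterior power `⋀[F]^j V`. -/
def wedge (F : Type*) {V : Type*} [Field F] [AddCommGroup V] [Module F V] (j : ℕ)
    (v : Fin j → V) : ⋀[F]^j V :=
  ⟨ExteriorAlgebra.ιMulti F j v, ExteriorAlgebra.ιMulti_range F j (Set.mem_range_self v)⟩

/-- The exterior power filtration `∧^j W` on `⋀[F]^j V` associated to a filtration `W` on
`V`: `(∧^j W)_i` is the span of the wedges `v₁ ∧ ⋯ ∧ v_j` with `v_k ∈ W_{i_k}` and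
`i₁ + ⋯ + i_j = i`. -/
def extPowerFiltration (F : Type*) {V : Type*} [Field F] [AddCommGroup V] [Module F V]
    (j : ℕ) (W : ℤ → Submodule F V) (i : ℤ) : Submodule F (⋀[F]^j V) :=
  ⨆ c : {c : Fin j → ℤ // ∑ k, c k = i},
    Submodule.span F
      {x : ⋀[F]^j V | ∃ v : Fin j → V, (∀ k, v k ∈ W (c.1 k)) ∧ wedge F j v = x}

/-!
Choose a Jordan basis of `N`. It completes `N` to an `sl₂`-triple `(H, X, N)` for which `H` is
diagonalizable with integer weights. By `sl₂`-theory in characteristic zero, `N ^ k` maps the weight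
space of weight `k` isomorphically onto that of weight `-k`, so the filtration of `V` by weights of
`H`, shifted by `w`, is a weight filtration of `N` centered at `w`; by uniqueness it is `W`.

Extension by the Leibniz rule is a Lie algebra homomorphism from `End V` to `End (∧^j V)`, so the
triple acts on `∧^j V`, with `N` acting as `N^{(∧j)}`, and the filtration of `∧^j V` by weights is a
weight filtration of `N^{(∧j)}`. Weights add up in wedge products, which identifies this filtration,
shifted by `w * j`, with `∧^j W`.
-/

namespace IsWeightFiltration

variable {F V : Type*} [Field F] [AddCommGroup V] [Module F V] {N : V →ₗ[F] V} {w : ℤ}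
  {W W' : ℤ → Submodule F V}

theorem pow_apply_mem (hW : IsWeightFiltration N w W) (k : ℕ) {i : ℤ} {v : V} (hv : v ∈ W i) :
    (N ^ k) v ∈ W (i - 2 * k) := by
  obtain ⟨-, -, -, hmap, -⟩ := hW
  induction k with
  | zero => simpa using hv
  | succ k ih =>
    rw [pow_succ', Module.End.mul_apply,
      show i - 2 * ((k + 1 : ℕ) : ℤ) = i - 2 * k - 2 by push_cast; ring]
    exact hmap _ (Submodule.mem_map_of_mem ih)

theorem isNilpotent (hW : IsWeightFiltration N w W) : IsNilpotent N := by
  obtain ⟨-, ⟨a, ha⟩, ⟨b, hb⟩, -, -⟩ := id hW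
  refine ⟨(b - a).toNat, LinearMap.ext fun v => ?_⟩
  have hv : v ∈ W b := hb b le_rfl ▸ Submodule.mem_top
  have hmem := hW.pow_apply_mem (b - a).toNat hv
  rwa [ha _ (by omega), Submodule.mem_bot] at hmem

theorem mem_of_pow_succ_apply_eq_zero (hW : IsWeightFiltration N w W) {m : ℕ} {v : V}
    (hv : (N ^ (m + 1)) v = 0) : v ∈ W (w + m) := by
  obtain ⟨-, -, ⟨b, hb⟩, -, hgr⟩ := hW
  have descend : ∀ d : ℕ, v ∈ W (w + (m + d : ℕ)) → v ∈ W (w + m) := by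
    intro d
    induction d with
    | zero => exact id
    | succ d ih =>
      intro hmem
      have hpow : (N ^ (m + (d + 1))) v = 0 := by
        rw [show m + (d + 1) = d + (m + 1) by ring, pow_add, Module.End.mul_apply, hv, map_zero]
      have hlower := (hgr (m + (d + 1) : ℕ) (by positivity)).2 v hmem
        (by rw [Int.toNat_natCast, hpow]; exact Submodule.zero_mem _)
      rw [show w + ((m + (d + 1) : ℕ) : ℤ) - 1 = w + (m + d : ℕ) by push_cast; ring] at hlower
      exact ih hlower
  refine descend (b - (w + m)).toNat ?_
  rw [hb _ (by omega)]
  exact Submodule.mem_top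

theorem exists_pow_apply_eq (hW : IsWeightFiltration N w W) {k : ℕ} {v : V}
    (hv : v ∈ W (w - k)) : ∃ u ∈ W (w + k), (N ^ k) u = v := by
  obtain ⟨hmono, ⟨a, ha⟩, -, hmap, hgr⟩ := hW
  suffices climb : ∀ d k : ℕ, w - (k + d : ℕ) ≤ a → ∀ v ∈ W (w - k),
      ∃ u ∈ W (w + k), (N ^ k) u = v from climb (w - a).toNat k (by omega) v hv
  intro d
  induction d with
  | zero =>
    intro k hk v hv
    rw [ha _ (by simpa using hk), Submodule.mem_bot] at hv
    exact ⟨0, Submodule.zero_mem _, by rw [map_zero, hv]⟩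
  | succ d ih =>
    intro k hk v hv
    rcases k.eq_zero_or_pos with rfl | hpos
    · exact ⟨v, by simpa using hv, by simp⟩
    obtain ⟨x, hx, _, ⟨u, hu, rfl⟩, rfl⟩ :=
      Submodule.mem_sup.1 ((hgr k (by exact_mod_cast hpos)).1 hv)
    obtain ⟨y, hy, rfl⟩ := ih (k + 1) (by omega) x (by rwa [Nat.cast_succ, ← sub_sub])
    have hNy : N y ∈ W (w + k) :=
      hmono (by push_cast; omega) (hmap _ (Submodule.mem_map_of_mem hy))
    refine ⟨N y + u, Submodule.add_mem _ hNy hu, ?_⟩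
    rw [map_add, pow_succ, Module.End.mul_apply, Int.toNat_natCast]

-- `N ^ (k + 1)` maps `W (w + k)` into `W (w - (k + 2))`, so every `v ∈ W (w + k)` differs from
-- an element of `ker (N ^ (k + 1))` by some `N u` with `u ∈ W (w + (k + 2))`.
theorem le_of_nonneg (hW : IsWeightFiltration N w W) (hW' : IsWeightFiltration N w W') (k : ℕ) :
    W (w + k) ≤ W' (w + k) := by
  obtain ⟨-, -, ⟨b, hb⟩, hmap', -⟩ := id hW'
  suffices descend : ∀ d k : ℕ, b ≤ w + (k + d : ℕ) → W (w + k) ≤ W' (w + k) from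
    descend (b - w).toNat k (by omega)
  intro d
  induction d with
  | zero => intro k hk; exact hb _ hk ▸ le_top
  | succ d ih =>
    intro k hk v hv
    have hpow := hW.pow_apply_mem (k + 1) hv
    rw [show w + k - 2 * ((k + 1 : ℕ) : ℤ) = w - (k + 2 : ℕ) by push_cast; ring] at hpow
    obtain ⟨u, hu, hNu⟩ := hW.exists_pow_apply_eq hpow
    have hker : v - N u ∈ W' (w + k) := hW'.mem_of_pow_succ_apply_eq_zero <| by
      rw [map_sub, ← Module.End.mul_apply, ← pow_succ, hNu, sub_self]
    have himage : N u ∈ W' (w + k) := by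
      have := hmap' _ (Submodule.mem_map_of_mem (ih (k + 2) (by omega) hu))
      rwa [show w + ((k + 2 : ℕ) : ℤ) - 2 = w + k by push_cast; ring] at this
    exact sub_add_cancel v (N u) ▸ Submodule.add_mem _ hker himage

theorem le (hW : IsWeightFiltration N w W) (hW' : IsWeightFiltration N w W') : W ≤ W' := by
  intro i
  obtain ⟨k, rfl | rfl⟩ : ∃ k : ℕ, i = w + k ∨ i = w - k :=
    ⟨(i - w).natAbs, by omega⟩
  · exact hW.le_of_nonneg hW' k
  · intro v hv
    obtain ⟨u, hu, rfl⟩ := hW.exists_pow_apply_eq hv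
    have := hW'.pow_apply_mem k (hW.le_of_nonneg hW' k hu)
    rwa [show w + k - 2 * (k : ℤ) = w - k by ring] at this

theorem unique (hW : IsWeightFiltration N w W) (hW' : IsWeightFiltration N w W') : W = W' :=
  le_antisymm (hW.le hW') (hW'.le hW)

end IsWeightFiltration

section WeightSpace

variable {R M : Type*} [CommRing R] [AddCommGroup M] [Module R M]

/-- The eigenspace of `H` for the integer eigenvalue `m`. -/
def weightSpace (H : Module.End R M) (m : ℤ) : Submodule R M :=
  H.eigenspace (m : R)

theorem mem_weightSpace {H : Module.End R M} {m : ℤ} {v : M} :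
    v ∈ weightSpace H m ↔ H v = (m : R) • v :=
  Module.End.mem_eigenspace_iff

theorem weightSpace_neg (H : Module.End R M) (m : ℤ) :
    weightSpace (-H) m = weightSpace H (-m) := by
  ext v
  rw [mem_weightSpace, mem_weightSpace, LinearMap.neg_apply, neg_eq_iff_eq_neg, Int.cast_neg,
    neg_smul]

theorem iSupIndep_weightSpace [IsDomain R] [CharZero R] [Module.IsTorsionFree R M]
    (H : Module.End R M) : iSupIndep (weightSpace H) :=
  H.eigenspaces_iSupIndep.comp Int.cast_injective

/-- `H` is diagonalizable with integer eigenvalues, and these eigenvalues are bounded. -/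
structure HasBoundedWeights (H : Module.End R M) : Prop where
  iSup_weightSpace : ⨆ m, weightSpace H m = ⊤
  exists_bound : ∃ b : ℤ, ∀ m, b < |m| → weightSpace H m = ⊥

theorem eq_weightSpace_of_le [IsDomain R] [CharZero R] [Module.IsTorsionFree R M]
    {H : Module.End R M} {G : ℤ → Submodule R M}
    (hle : ∀ m, G m ≤ weightSpace H m) (htop : ⨆ m, G m = ⊤) : G = weightSpace H :=
  ((iSupIndep_weightSpace H).le_iff_eq_of_iSup_eq_top htop).1 hle

theorem HasBoundedWeights.of_le [IsDomain R] [CharZero R] [Module.IsTorsionFree R M]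
    {H : Module.End R M} {G : ℤ → Submodule R M} {b : ℤ} (hle : ∀ m, G m ≤ weightSpace H m)
    (htop : ⨆ m, G m = ⊤) (hbot : ∀ m, b < |m| → G m = ⊥) : HasBoundedWeights H := by
  obtain rfl := eq_weightSpace_of_le hle htop
  exact ⟨htop, b, hbot⟩

theorem HasBoundedWeights.of_basis [IsDomain R] [CharZero R] {ι : Type*}
    {H : Module.End R M} (e : Module.Basis ι R M) {μ : ι → ℤ} {b : ℤ}
    (hH : ∀ i, H (e i) = (μ i : R) • e i) (hμ : ∀ i, |μ i| ≤ b) : HasBoundedWeights H := by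
  have := Module.Free.of_basis e
  refine .of_le (G := fun m => Submodule.span R (e '' {i | μ i = m})) (b := b) (fun m => ?_) ?_
    fun m hm => ?_
  · rw [Submodule.span_le]
    rintro _ ⟨i, rfl, rfl⟩
    exact mem_weightSpace.2 (hH i)
  · rw [← Submodule.span_iUnion, ← Set.image_iUnion,
      Set.iUnion_eq_univ_iff.2 fun i => ⟨μ i, rfl⟩, Set.image_univ, e.span_eq]
  · have hempty : {i | μ i = m} = ∅ :=
      Set.eq_empty_of_forall_notMem fun i hi => (hμ i).not_gt (hi ▸ hm)
    simp [hempty]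

/-- The filtration whose `i`-th step is spanned by the weight spaces of `H` of weight at most
`i - c`: a vector of weight `m` is placed in degree `c + m`. -/
def weightSpaceFiltration (H : Module.End R M) (c i : ℤ) : Submodule R M :=
  ⨆ m : Set.Iic (i - c), weightSpace H m

variable {H : Module.End R M}

theorem weightSpace_le_weightSpaceFiltration {c i m : ℤ} (h : c + m ≤ i) :
    weightSpace H m ≤ weightSpaceFiltration H c i :=
  le_iSup (fun n : Set.Iic (i - c) => weightSpace H n) ⟨m, le_sub_iff_add_le'.2 h⟩

theorem weightSpaceFiltration_le {c i : ℤ} {p : Submodule R M}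
    (h : ∀ m, c + m ≤ i → weightSpace H m ≤ p) : weightSpaceFiltration H c i ≤ p :=
  iSup_le fun m => h m (le_sub_iff_add_le'.1 m.2)

theorem monotone_weightSpaceFiltration (H : Module.End R M) (c : ℤ) :
    Monotone (weightSpaceFiltration H c) := fun _ _ hij =>
  weightSpaceFiltration_le fun _ hm => weightSpace_le_weightSpaceFiltration (hm.trans hij)

theorem weightSpaceFiltration_le_sup (H : Module.End R M) (c m : ℤ) :
    weightSpaceFiltration H c (c + m) ≤
      weightSpaceFiltration H c (c + m - 1) ⊔ weightSpace H m := by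
  refine weightSpaceFiltration_le fun n hn => ?_
  rcases (add_le_add_iff_left c).1 hn |>.lt_or_eq with hlt | rfl
  · exact le_sup_of_le_left (weightSpace_le_weightSpaceFiltration (by omega))
  · exact le_sup_right

theorem disjoint_weightSpace_weightSpaceFiltration [IsDomain R] [CharZero R]
    [Module.IsTorsionFree R M] (H : Module.End R M) {c i m : ℤ} (h : i < c + m) :
    Disjoint (weightSpace H m) (weightSpaceFiltration H c i) :=
  (iSupIndep_weightSpace H m).mono_right <|
    weightSpaceFiltration_le fun n hn => le_iSup₂_of_le n (by omega) le_rfl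

namespace HasBoundedWeights

theorem exists_weightSpaceFiltration_eq_bot (hH : HasBoundedWeights H) (c : ℤ) :
    ∃ a : ℤ, ∀ i ≤ a, weightSpaceFiltration H c i = ⊥ := by
  obtain ⟨b, hb⟩ := hH.exists_bound
  refine ⟨c - b - 1, fun i hi => eq_bot_iff.2 (weightSpaceFiltration_le fun m hm => ?_)⟩
  exact (hb m (lt_of_lt_of_le (by omega) (neg_le_abs m))).le

theorem exists_weightSpaceFiltration_eq_top (hH : HasBoundedWeights H) (c : ℤ) :
    ∃ a : ℤ, ∀ i, a ≤ i → weightSpaceFiltration H c i = ⊤ := by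
  obtain ⟨b, hb⟩ := hH.exists_bound
  refine ⟨c + b, fun i hi => eq_top_iff.2 (hH.iSup_weightSpace.ge.trans (iSup_le fun m => ?_))⟩
  rcases lt_or_ge b |m| with hlt | hge
  · exact (hb m hlt).trans_le bot_le
  · exact weightSpace_le_weightSpaceFiltration (by linarith [le_abs_self m])

end HasBoundedWeights

end WeightSpace

/-- The relations of the standard basis of `sl₂`. This is `IsSl2Triple` without the condition
`h ≠ 0`, so that the zero triple is allowed and the notion is stable under Lie algebra
homomorphisms. -/
structure Sl2Relations {L : Type*} [LieRing L] (h e f : L) : Prop where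
  lie_e_f : ⁅e, f⁆ = h
  lie_h_e : ⁅h, e⁆ = 2 • e
  lie_h_f : ⁅h, f⁆ = -(2 • f)

namespace Sl2Relations

section LieRing

variable {R L L' : Type*} [CommRing R] [LieRing L] [LieAlgebra R L] [LieRing L'] [LieAlgebra R L']
  {h e f : L}

theorem map (t : Sl2Relations h e f) (φ : L →ₗ⁅R⁆ L') : Sl2Relations (φ h) (φ e) (φ f) where
  lie_e_f := by rw [← LieHom.map_lie, t.lie_e_f]
  lie_h_e := by rw [← LieHom.map_lie, t.lie_h_e, map_nsmul]
  lie_h_f := by rw [← LieHom.map_lie, t.lie_h_f, map_neg, map_nsmul]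

end LieRing

theorem symm {L : Type*} [LieRing L] {h e f : L} (t : Sl2Relations h e f) :
    Sl2Relations (-h) f e where
  lie_e_f := by rw [← lie_skew, t.lie_e_f]
  lie_h_e := by rw [neg_lie, t.lie_h_f, neg_neg]
  lie_h_f := by rw [neg_lie, t.lie_h_e]

attribute [local instance] LieRing.ofAssociativeRing

section Representation

variable {R M : Type*} [CommRing R] [AddCommGroup M] [Module R M] {H X Y : Module.End R M}
  {m : ℤ} {v : M}

theorem raise_mem_weightSpace (t : Sl2Relations H X Y) (hv : v ∈ weightSpace H m) :
    X v ∈ weightSpace H (m + 2) := by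
  have hHX : H (X v) - X (H v) = 2 • X v := LinearMap.congr_fun t.lie_h_e v
  rw [mem_weightSpace] at hv ⊢
  rw [eq_add_of_sub_eq' hHX, hv, map_smul, Int.cast_add, add_smul, Int.cast_two, two_smul,
    two_smul]

theorem pow_raise_mem_weightSpace (t : Sl2Relations H X Y) (hv : v ∈ weightSpace H m) (k : ℕ) :
    (X ^ k) v ∈ weightSpace H (m + 2 * k) := by
  induction k with
  | zero => simpa using hv
  | succ k ih =>
    rw [pow_succ', Module.End.mul_apply,
      show m + 2 * ((k + 1 : ℕ) : ℤ) = m + 2 * k + 2 by push_cast; ring]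
    exact t.raise_mem_weightSpace ih

theorem pow_lower_mem_weightSpace (t : Sl2Relations H X Y) (hv : v ∈ weightSpace H m) (k : ℕ) :
    (Y ^ k) v ∈ weightSpace H (m - 2 * k) := by
  rw [← neg_neg m, ← weightSpace_neg] at hv
  have := t.symm.pow_raise_mem_weightSpace hv k
  rwa [weightSpace_neg, neg_add, neg_neg, ← sub_eq_add_neg] at this

theorem lower_mem_weightSpace (t : Sl2Relations H X Y) (hv : v ∈ weightSpace H m) :
    Y v ∈ weightSpace H (m - 2) := by
  simpa using t.pow_lower_mem_weightSpace hv 1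

theorem raise_pow_succ_lower_apply (t : Sl2Relations H X Y) (hv : v ∈ weightSpace H m) (k : ℕ) :
    X ((Y ^ (k + 1)) v) =
      (Y ^ (k + 1)) (X v) + (((k + 1) * (m - k) : ℤ) : R) • (Y ^ k) v := by
  have hXY (u : M) : X (Y u) = Y (X u) + H u :=
    eq_add_of_sub_eq' (LinearMap.congr_fun t.lie_e_f u)
  induction k with
  | zero => simp [hXY, mem_weightSpace.1 hv]
  | succ k ih =>
    calc X ((Y ^ (k + 1 + 1)) v)
        = Y (X ((Y ^ (k + 1)) v)) + H ((Y ^ (k + 1)) v) := by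
          rw [pow_succ', Module.End.mul_apply, hXY]
      _ = (Y ^ (k + 1 + 1)) (X v) + (((k + 1) * (m - k) : ℤ) : R) • (Y ^ (k + 1)) v
            + ((m - 2 * (k + 1 : ℕ) : ℤ) : R) • (Y ^ (k + 1)) v := by
          rw [ih, map_add, map_smul, mem_weightSpace.1 (t.pow_lower_mem_weightSpace hv _)]
          simp only [pow_succ' Y, Module.End.mul_apply]
      _ = _ := by
          rw [add_assoc, ← add_smul, ← Int.cast_add]
          congr 3
          push_cast
          ring

theorem pow_raise_pow_lower_apply (t : Sl2Relations H X Y) {k : ℕ} (hv : v ∈ weightSpace H k)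
    (hXv : X v = 0) (i : ℕ) :
    (X ^ i) ((Y ^ i) v) = ((i.factorial * k.descFactorial i : ℕ) : R) • v := by
  induction i with
  | zero => simp
  | succ i ih =>
    rw [pow_succ X, Module.End.mul_apply, t.raise_pow_succ_lower_apply hv, hXv, map_zero, zero_add,
      map_smul, ih, smul_smul, Nat.descFactorial_succ, Nat.factorial_succ]
    rcases le_or_gt i k with hik | hki
    · congr 1
      push_cast [hik]
      ring
    · simp [Nat.descFactorial_eq_zero_iff_lt.2 hki]

theorem pow_lower_mem_weightSpaceFiltration (t : Sl2Relations H X Y) (c : ℤ) {i : ℤ} (k : ℕ)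
    (hv : v ∈ weightSpaceFiltration H c i) :
    (Y ^ k) v ∈ weightSpaceFiltration H c (i - 2 * k) := by
  suffices weightSpaceFiltration H c i ≤
      (weightSpaceFiltration H c (i - 2 * k)).comap (Y ^ k) from this hv
  exact weightSpaceFiltration_le fun m hm u hu =>
    weightSpace_le_weightSpaceFiltration (by omega) (t.pow_lower_mem_weightSpace hu k)

theorem exists_pow_raise_apply_eq_zero (t : Sl2Relations H X Y) (hH : HasBoundedWeights H)
    (hv : v ∈ weightSpace H m) : ∃ n : ℕ, (X ^ n) v = 0 := by
  obtain ⟨b, hb⟩ := hH.exists_bound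
  refine ⟨(b - m).toNat + m.natAbs + 1, ?_⟩
  have hmem := t.pow_raise_mem_weightSpace hv ((b - m).toNat + m.natAbs + 1)
  rwa [hb _ (lt_of_lt_of_le (by omega) (le_abs_self _)), Submodule.mem_bot] at hmem

theorem exists_pow_lower_apply_eq_zero (t : Sl2Relations H X Y) (hH : HasBoundedWeights H)
    (hv : v ∈ weightSpace H m) : ∃ n : ℕ, (Y ^ n) v = 0 := by
  obtain ⟨b, hb⟩ := hH.exists_bound
  refine ⟨(b + m).toNat + m.natAbs + 1, ?_⟩
  have hmem := t.pow_lower_mem_weightSpace hv ((b + m).toNat + m.natAbs + 1)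
  rwa [hb _ (lt_of_lt_of_le (by omega) (neg_le_abs _)), Submodule.mem_bot] at hmem

variable [IsDomain R] [CharZero R]

-- By induction on `n`, applied to `X v`, one may assume `X v = 0`.
theorem eq_zero_of_pow_lower_eq_zero [Module.IsTorsionFree R M] (t : Sl2Relations H X Y) {k n : ℕ}
    (hv : v ∈ weightSpace H k) (hXv : (X ^ n) v = 0) (hYv : (Y ^ k) v = 0) : v = 0 := by
  induction n generalizing k v with
  | zero => simpa using hXv
  | succ n ih =>
    have hY_succ : (Y ^ (k + 1)) v = 0 := by rw [pow_succ', Module.End.mul_apply, hYv, map_zero]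
    have hYX : (Y ^ (k + 2)) (X v) = 0 := by
      have := t.raise_pow_succ_lower_apply hv (k + 1)
      rwa [pow_succ' Y (k + 1), Module.End.mul_apply, hY_succ, map_zero, map_zero, smul_zero,
        add_zero, ← pow_succ', eq_comm] at this
    have hX : X v = 0 :=
      ih (k := k + 2) (by exact_mod_cast t.raise_mem_weightSpace hv)
        (by rwa [pow_succ, Module.End.mul_apply] at hXv) hYX
    have hscalar := t.pow_raise_pow_lower_apply hv hX k
    rw [hYv, map_zero, eq_comm, smul_eq_zero, Nat.cast_eq_zero, Nat.descFactorial_self] at hscalar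
    exact hscalar.resolve_left (mul_self_ne_zero.2 k.factorial_ne_zero)

end Representation

section Field

variable {F M : Type*} [Field F] [CharZero F] [AddCommGroup M] [Module F M]
  {H X Y : Module.End F M} {v : M}

-- By induction on `n`, applied to `Y v`, one may assume `Y v = 0`.
theorem exists_pow_lower_eq (t : Sl2Relations H X Y) {k n : ℕ}
    (hv : v ∈ weightSpace H (-k)) (hYv : (Y ^ n) v = 0) :
    ∃ u ∈ weightSpace H k, (Y ^ k) u = v := by
  induction n generalizing k v with
  | zero => exact ⟨0, Submodule.zero_mem _, by simpa using hYv.symm⟩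
  | succ n ih =>
    have hY_mem : Y v ∈ weightSpace H (-(k + 2 : ℕ)) := by
      have := t.lower_mem_weightSpace hv
      rwa [show -(k : ℤ) - 2 = -(k + 2 : ℕ) by push_cast; ring] at this
    obtain ⟨u, hu, hYu⟩ := ih hY_mem (by rwa [pow_succ, Module.End.mul_apply] at hYv)
    have hu' : Y u ∈ weightSpace H k := by simpa using t.lower_mem_weightSpace hu
    have hYv' : Y (v - (Y ^ k) (Y u)) = 0 := by
      rw [map_sub, ← hYu, ← Module.End.mul_apply, ← Module.End.mul_apply, ← pow_succ', ← pow_succ,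
        sub_self]
    have hv' : v - (Y ^ k) (Y u) ∈ weightSpace H (-k) := by
      refine Submodule.sub_mem _ hv ?_
      have := t.pow_lower_mem_weightSpace hu' k
      rwa [show (k : ℤ) - 2 * k = -k by ring] at this
    have hscalar := t.symm.pow_raise_pow_lower_apply (by rwa [weightSpace_neg]) hYv' k
    have hne : ((k.factorial * k.descFactorial k : ℕ) : F) ≠ 0 := by
      rw [Nat.descFactorial_self]
      exact_mod_cast mul_self_ne_zero.2 k.factorial_ne_zero
    refine ⟨((k.factorial * k.descFactorial k : ℕ) : F)⁻¹ • (X ^ k) (v - (Y ^ k) (Y u)) + Y u,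
      Submodule.add_mem _ (Submodule.smul_mem _ _ ?_) hu', ?_⟩
    · have := t.pow_raise_mem_weightSpace hv' k
      rwa [show -(k : ℤ) + 2 * k = k by ring] at this
    · rw [map_add, map_smul, hscalar, inv_smul_smul₀ hne, sub_add_cancel]

theorem weightSpace_neg_le_map_pow_lower (t : Sl2Relations H X Y) (hH : HasBoundedWeights H)
    (k : ℕ) : weightSpace H (-k) ≤ (weightSpace H k).map (Y ^ k) := fun _ hv =>
  have ⟨_, hn⟩ := t.exists_pow_lower_apply_eq_zero hH hv
  t.exists_pow_lower_eq hv hn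

theorem mem_weightSpaceFiltration_of_pow_lower_mem (t : Sl2Relations H X Y)
    (hH : HasBoundedWeights H) {c : ℤ} {k : ℕ}
    (hv : v ∈ weightSpaceFiltration H c (c + k))
    (hYv : (Y ^ k) v ∈ weightSpaceFiltration H c (c - k - 1)) :
    v ∈ weightSpaceFiltration H c (c + k - 1) := by
  obtain ⟨x, hx, y, hy, rfl⟩ := Submodule.mem_sup.1 (weightSpaceFiltration_le_sup H c k hv)
  have hYx := t.pow_lower_mem_weightSpaceFiltration c k hx
  have hYy : (Y ^ k) y ∈ weightSpaceFiltration H c (c - k - 1) := by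
    rw [show c + k - 1 - 2 * (k : ℤ) = c - k - 1 by ring] at hYx
    rwa [map_add, Submodule.add_mem_iff_right _ hYx] at hYv
  have hYy_zero : (Y ^ k) y = 0 :=
    Submodule.disjoint_def.1 (disjoint_weightSpace_weightSpaceFiltration H (by omega)) _
      (t.pow_lower_mem_weightSpace hy k) hYy
  obtain ⟨n, hn⟩ := t.exists_pow_raise_apply_eq_zero hH hy
  rwa [t.eq_zero_of_pow_lower_eq_zero hy hn hYy_zero, add_zero]

theorem isWeightFiltration (t : Sl2Relations H X Y) (hH : HasBoundedWeights H) (c : ℤ) :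
    IsWeightFiltration Y c (weightSpaceFiltration H c) := by
  refine ⟨monotone_weightSpaceFiltration H c, hH.exists_weightSpaceFiltration_eq_bot c,
    hH.exists_weightSpaceFiltration_eq_top c, fun i => ?_, fun α hα => ?_⟩
  · rintro _ ⟨v, hv, rfl⟩
    simpa using t.pow_lower_mem_weightSpaceFiltration c 1 hv
  · lift α to ℕ using hα.le
    rw [Int.toNat_natCast]
    refine ⟨?_, fun v => t.mem_weightSpaceFiltration_of_pow_lower_mem hH⟩
    rw [sub_eq_add_neg c]
    refine (weightSpaceFiltration_le_sup H c _).trans (sup_le_sup_left ?_ _)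
    exact (t.weightSpace_neg_le_map_pow_lower hH α).trans
      (Submodule.map_mono (weightSpace_le_weightSpaceFiltration le_rfl))

end Field

end Sl2Relations

section StringMap

variable {R M : Type*} [CommRing R] [AddCommGroup M] [Module R M] {N : Module.End R M}
  {C : Submodule R M} {n : ℕ}

/-- The map `(c₀, …, cₙ) ↦ ∑ₖ Nᵏ cₖ`. Its range is the sum of the `N`-strings of length `n + 1`
starting in `C`. -/
def stringMap (N : Module.End R M) (C : Submodule R M) (n : ℕ) : (Fin (n + 1) → C) →ₗ[R] M :=
  ∑ k : Fin (n + 1), (N ^ (k : ℕ)) ∘ₗ C.subtype ∘ₗ LinearMap.proj k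

theorem stringMap_apply (N : Module.End R M) (C : Submodule R M) (n : ℕ) (c : Fin (n + 1) → C) :
    stringMap N C n c = ∑ k : Fin (n + 1), (N ^ (k : ℕ)) (c k) := by
  simp [stringMap, LinearMap.sum_apply]

theorem stringMap_single (N : Module.End R M) (C : Submodule R M) (n : ℕ) (k : Fin (n + 1))
    (c : C) : stringMap N C n (Pi.single k c) = (N ^ (k : ℕ)) c := by
  rw [stringMap_apply, Finset.sum_eq_single k (fun l _ hl => by simp [hl]) (by simp),
    Pi.single_eq_same]

theorem pow_apply_mem_range_stringMap (hN : N ^ (n + 1) = 0) (k : ℕ) (c : C) :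
    (N ^ k) c ∈ LinearMap.range (stringMap N C n) := by
  rcases lt_or_ge k (n + 1) with hk | hk
  · exact ⟨Pi.single ⟨k, hk⟩ c, stringMap_single N C n _ c⟩
  · simp [pow_eq_zero_of_le hk hN]

theorem apply_mem_range_stringMap (hN : N ^ (n + 1) = 0) {v : M}
    (hv : v ∈ LinearMap.range (stringMap N C n)) : N v ∈ LinearMap.range (stringMap N C n) := by
  obtain ⟨c, rfl⟩ := hv
  rw [stringMap_apply, map_sum]
  refine Submodule.sum_mem _ fun k _ => ?_
  rw [← Module.End.mul_apply, ← pow_succ']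
  exact pow_apply_mem_range_stringMap hN _ _

-- If `c l = 0` for `l < k`, then applying `N ^ (n - k)` to `∑ l, N ^ l (c l)` isolates
-- `N ^ n (c k)`.
theorem stringMap_injective (hN : N ^ (n + 1) = 0) (hC : Disjoint C (LinearMap.ker (N ^ n))) :
    Function.Injective (stringMap N C n) := by
  rw [injective_iff_map_eq_zero]
  intro c hc
  funext k
  induction k using WellFoundedLT.induction with
  | ind k ih =>
    have hpow (l : Fin (n + 1)) (hl : l ≠ k) : (N ^ (n - k + l : ℕ)) (c l : M) = 0 := by
      rcases lt_or_gt_of_ne hl with hlt | hgt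
      · simp [ih l hlt]
      · rw [pow_eq_zero_of_le (by omega) hN, LinearMap.zero_apply]
    have hker : (N ^ n) (c k : M) = 0 := calc
      (N ^ n) (c k : M) = (N ^ (n - k + k : ℕ)) (c k : M) := by congr 2; omega
      _ = ∑ l : Fin (n + 1), (N ^ (n - k + l : ℕ)) (c l : M) :=
        (Finset.sum_eq_single k (fun l _ => hpow l) (by simp)).symm
      _ = (N ^ (n - k : ℕ)) (stringMap N C n c) := by
        simp only [stringMap_apply, map_sum, pow_add, Module.End.mul_apply]
      _ = 0 := by rw [hc, map_zero]
    exact Subtype.ext (Submodule.disjoint_def.1 hC _ (c k).2 hker)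

end StringMap

theorem isCompl_range_ker_of_comp_eq_id {R M M' : Type*} [Ring R] [AddCommGroup M] [Module R M]
    [AddCommGroup M'] [Module R M'] {f : M →ₗ[R] M'} {g : M' →ₗ[R] M}
    (h : g ∘ₗ f = LinearMap.id) : IsCompl (LinearMap.range f) (LinearMap.ker g) := by
  have hgf (x : M) : g (f x) = x := LinearMap.congr_fun h x
  constructor
  · rw [Submodule.disjoint_def]
    rintro _ ⟨x, rfl⟩ hx
    rw [LinearMap.mem_ker, hgf] at hx
    rw [hx, map_zero]
  · rw [Submodule.codisjoint_iff_exists_add_eq]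
    exact fun y => ⟨f (g y), y - f (g y), ⟨g y, rfl⟩, by simp [hgf], by simp⟩

section StringComplement

variable {F V : Type*} [Field F] [AddCommGroup V] [Module F V] {N : Module.End F V}
  {C : Submodule F V} {n : ℕ}

theorem exists_linearMap_pow_apply_eq_ite (hN : N ^ (n + 1) = 0)
    (hC : Disjoint C (LinearMap.ker (N ^ n))) :
    ∃ ρ : V →ₗ[F] C, ∀ (k : ℕ) (c : C), ρ ((N ^ k) c) = if k = n then c else 0 := by
  obtain ⟨r, hr⟩ := LinearMap.exists_leftInverse_of_injective (stringMap N C n)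
    (LinearMap.ker_eq_bot.2 (stringMap_injective hN hC))
  refine ⟨LinearMap.proj (Fin.last n) ∘ₗ r, fun k c => ?_⟩
  rcases lt_or_ge k (n + 1) with hk | hk
  · have hrk : r ((N ^ k) c) = Pi.single ⟨k, hk⟩ c := by
      rw [← stringMap_single N C n ⟨k, hk⟩ c]
      exact LinearMap.congr_fun hr _
    simp [hrk, Pi.single_apply, Fin.ext_iff, eq_comm]
  · simp [pow_eq_zero_of_le hk hN, show k ≠ n by omega]

theorem exists_isCompl_range_stringMap (hN : N ^ (n + 1) = 0)
    (hC : IsCompl C (LinearMap.ker (N ^ n))) :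
    ∃ K : Submodule F V, IsCompl (LinearMap.range (stringMap N C n)) K ∧
      (∀ v ∈ K, N v ∈ K) ∧ ∀ v ∈ K, (N ^ n) v = 0 := by
  obtain ⟨ρ, hρ⟩ := exists_linearMap_pow_apply_eq_ite hN hC.disjoint
  let coords : V →ₗ[F] Fin (n + 1) → C :=
    LinearMap.pi fun k : Fin (n + 1) => ρ ∘ₗ (N ^ (n - k : ℕ))
  have mem_ker_coords (v : V) : v ∈ LinearMap.ker coords ↔ ∀ k : ℕ, ρ ((N ^ k) v) = 0 := by
    refine ⟨fun hv k => ?_, fun hv => funext fun k => hv _⟩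
    rcases lt_or_ge n k with hk | hk
    · simp [pow_eq_zero_of_le hk hN]
    · simpa [coords, Nat.sub_sub_self hk] using congr_fun hv ⟨n - k, by omega⟩
  have coords_stringMap : coords ∘ₗ stringMap N C n = LinearMap.id := by
    refine LinearMap.pi_ext fun k c => funext fun l => ?_
    rw [LinearMap.comp_apply, stringMap_single, LinearMap.id_apply, LinearMap.pi_apply,
      LinearMap.comp_apply, ← Module.End.mul_apply, ← pow_add, hρ, Pi.single_apply]
    exact if_congr (by omega) rfl rfl
  refine ⟨LinearMap.ker coords, isCompl_range_ker_of_comp_eq_id coords_stringMap,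
    fun v hv => ?_, fun v hv => ?_⟩
  · rw [mem_ker_coords] at hv ⊢
    intro k
    rw [← Module.End.mul_apply, ← pow_succ]
    exact hv (k + 1)
  · obtain ⟨c, z, hc, hz, rfl⟩ := Submodule.codisjoint_iff_exists_add_eq.1 hC.codisjoint v
    have hpow : (N ^ n) (c + z) = (N ^ n) c := by rw [map_add, LinearMap.mem_ker.1 hz, add_zero]
    have hc_zero : (⟨c, hc⟩ : C) = 0 := by
      have := (mem_ker_coords _).1 hv n
      rwa [hpow, hρ n ⟨c, hc⟩, if_pos rfl] at this
    rw [hpow, show c = 0 from congrArg Subtype.val hc_zero, map_zero]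

end StringComplement

/-- The vectors `Nᵏ (g i)`, `k < d i`, form a basis `b` of `M`, and `N ^ d i` annihilates `g i`:
in this basis `N` is in Jordan normal form, with one block of size `d i` for each `i`. -/
structure IsJordanBasis {R M ι : Type*} [CommRing R] [AddCommGroup M] [Module R M] {d : ι → ℕ}
    (N : Module.End R M) (b : Module.Basis (Σ i, Fin (d i)) R M) (g : ι → M) : Prop where
  basis_apply : ∀ i k, b ⟨i, k⟩ = (N ^ (k : ℕ)) (g i)
  pow_apply_eq_zero : ∀ i, (N ^ d i) (g i) = 0

section JordanBasis

variable {R M ι κ : Type*} [CommRing R] [AddCommGroup M] [Module R M] {N : Module.End R M}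

theorem coe_pow_restrict_apply {p : Submodule R M} (hp : ∀ v ∈ p, N v ∈ p) (k : ℕ) (v : p) :
    (((N.restrict hp) ^ k) v : M) = (N ^ k) v := by
  rw [Module.End.pow_restrict, LinearMap.coe_restrict_apply]

theorem exists_isJordanBasis_of_isCompl {d : ι → ℕ} {e : κ → ℕ} {p q : Submodule R M}
    (hpq : IsCompl p q) {hp : ∀ v ∈ p, N v ∈ p} {hq : ∀ v ∈ q, N v ∈ q}
    {b : Module.Basis (Σ i, Fin (d i)) R p} {g : ι → p}
    (hb : IsJordanBasis (N.restrict hp) b g)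
    {b' : Module.Basis (Σ i, Fin (e i)) R q} {g' : κ → q}
    (hb' : IsJordanBasis (N.restrict hq) b' g') :
    ∃ (b'' : Module.Basis (Σ i, Fin (Sum.elim d e i)) R M) (g'' : ι ⊕ κ → M),
      IsJordanBasis N b'' g'' := by
  refine ⟨((b.prod b').map (Submodule.prodEquivOfIsCompl p q hpq)).reindex
    (Equiv.sumSigmaDistrib fun i => Fin (Sum.elim d e i)).symm,
    Sum.elim (fun i => (g i : M)) (fun i => (g' i : M)), ?_, ?_⟩
  · rintro (i | i) k
    · simpa [Equiv.sumSigmaDistrib] using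
        (congrArg Subtype.val (hb.basis_apply i k)).trans (coe_pow_restrict_apply _ k _)
    · simpa [Equiv.sumSigmaDistrib] using
        (congrArg Subtype.val (hb'.basis_apply i k)).trans (coe_pow_restrict_apply _ k _)
  · rintro (i | i)
    · simpa [coe_pow_restrict_apply] using congrArg Subtype.val (hb.pow_apply_eq_zero i)
    · simpa [coe_pow_restrict_apply] using congrArg Subtype.val (hb'.pow_apply_eq_zero i)

theorem exists_isJordanBasis_range_stringMap {C : Submodule R M} {n : ℕ} (hN : N ^ (n + 1) = 0)
    (hC : Disjoint C (LinearMap.ker (N ^ n))) (b : Module.Basis κ R C) :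
    ∃ (b' : Module.Basis (Σ _ : κ, Fin (n + 1)) R (LinearMap.range (stringMap N C n)))
      (g : κ → LinearMap.range (stringMap N C n)),
      IsJordanBasis (N.restrict fun _ => apply_mem_range_stringMap hN) b' g := by
  let swap : (Σ _ : Fin (n + 1), κ) ≃ Σ _ : κ, Fin (n + 1) :=
    (Equiv.sigmaEquivProd _ _).trans ((Equiv.prodComm _ _).trans (Equiv.sigmaEquivProd _ _).symm)
  refine ⟨((Pi.basis fun _ => b).map
    (LinearEquiv.ofInjective _ (stringMap_injective hN hC))).reindex swap,
    fun i => ⟨b i, pow_apply_mem_range_stringMap hN 0 (b i)⟩, fun i k => ?_, fun i => ?_⟩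
  · apply Subtype.ext
    simp [swap, coe_pow_restrict_apply, stringMap_single]
  · apply Subtype.ext
    simp [coe_pow_restrict_apply, hN]

end JordanBasis

theorem exists_isJordanBasis.{u, v} {F : Type u} {V : Type v} [Field F] [AddCommGroup V]
    [Module F V] {N : Module.End F V} {n : ℕ} (hN : N ^ n = 0) :
    ∃ (ι : Type v) (d : ι → ℕ) (b : Module.Basis (Σ i, Fin (d i)) F V) (g : ι → V),
      IsJordanBasis N b g ∧ ∀ i, d i ≤ n := by
  induction n generalizing V with
  | zero =>
    have : Subsingleton V := ⟨fun x y => by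
      rw [← Module.End.one_apply (R := F) x, ← Module.End.one_apply (R := F) y, ← pow_zero N, hN]
      rfl⟩
    exact ⟨PEmpty, PEmpty.elim, Module.Basis.empty V, PEmpty.elim,
      ⟨fun i => i.elim, fun i => i.elim⟩, fun i => i.elim⟩
  | succ n ih =>
    obtain ⟨C, hC⟩ := Submodule.exists_isCompl (LinearMap.ker (N ^ n))
    obtain ⟨K, hK, hNK, hpow⟩ := exists_isCompl_range_stringMap hN hC.symm
    obtain ⟨b₁, g₁, h₁⟩ := exists_isJordanBasis_range_stringMap hN hC.symm.disjoint
      (Module.Basis.ofVectorSpace F C)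
    obtain ⟨ι, d, b₂, g₂, h₂, hd⟩ := ih (N := N.restrict hNK) <| LinearMap.ext fun v =>
      Subtype.ext <| (coe_pow_restrict_apply hNK n v).trans (hpow v v.2)
    obtain ⟨b, g, h⟩ := exists_isJordanBasis_of_isCompl hK h₁ h₂
    refine ⟨_, _, b, g, h, ?_⟩
    rintro (i | i)
    · exact le_rfl
    · exact (hd i).trans n.le_succ

namespace IsJordanBasis

variable {R M ι : Type*} [CommRing R] [AddCommGroup M] [Module R M] {d : ι → ℕ}
  {N : Module.End R M} {b : Module.Basis (Σ i, Fin (d i)) R M} {g : ι → M}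

theorem pow_apply_eq_zero_of_le (hb : IsJordanBasis N b g) {i : ι} {k : ℕ} (hk : d i ≤ k) :
    (N ^ k) (g i) = 0 := by
  rw [← Nat.sub_add_cancel hk, pow_add, Module.End.mul_apply, hb.pow_apply_eq_zero, map_zero]

theorem end_ext (hb : IsJordanBasis N b g) {f f' : Module.End R M}
    (h : ∀ (i : ι) (k : ℕ), f ((N ^ k) (g i)) = f' ((N ^ k) (g i))) : f = f' :=
  b.ext fun ⟨i, k⟩ => by rw [hb.basis_apply, h]

/-- The diagonal endomorphism for which `Nᵏ (g i)` has weight `d i - 1 - 2 k`, so that the weights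
of each Jordan block are symmetric about `0`. -/
noncomputable def weightMap (b : Module.Basis (Σ i, Fin (d i)) R M) : Module.End R M :=
  b.constr R fun s => ((d s.1 - 1 - 2 * s.2 : ℤ) : R) • b s

theorem weightMap_basis (b : Module.Basis (Σ i, Fin (d i)) R M) (s : Σ i, Fin (d i)) :
    weightMap b (b s) = ((d s.1 - 1 - 2 * s.2 : ℤ) : R) • b s :=
  b.constr_basis R _ s

theorem weightMap_pow_apply (hb : IsJordanBasis N b g) (i : ι) (k : ℕ) :
    weightMap b ((N ^ k) (g i)) = ((d i - 1 - 2 * k : ℤ) : R) • (N ^ k) (g i) := by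
  rcases lt_or_ge k (d i) with hk | hk
  · simpa only [hb.basis_apply] using weightMap_basis b ⟨i, ⟨k, hk⟩⟩
  · rw [hb.pow_apply_eq_zero_of_le hk, map_zero, smul_zero]

/-- The endomorphism `Nᵏ (g i) ↦ k (d i - k) Nᵏ⁻¹ (g i)`, the raising operator of the `sl₂`-triple
with lowering operator `N` and semisimple element `weightMap b`. -/
noncomputable def raisingMap (N : Module.End R M) (b : Module.Basis (Σ i, Fin (d i)) R M)
    (g : ι → M) : Module.End R M :=
  b.constr R fun s => ((s.2 * (d s.1 - s.2) : ℤ) : R) • (N ^ (s.2 - 1 : ℕ)) (g s.1)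

theorem raisingMap_pow_apply (hb : IsJordanBasis N b g) (i : ι) (k : ℕ) :
    raisingMap N b g ((N ^ k) (g i)) = ((k * (d i - k) : ℤ) : R) • (N ^ (k - 1)) (g i) := by
  rcases lt_trichotomy k (d i) with hlt | rfl | hgt
  · have := b.constr_basis R
      (fun s => ((s.2 * (d s.1 - s.2) : ℤ) : R) • (N ^ (s.2 - 1 : ℕ)) (g s.1)) ⟨i, ⟨k, hlt⟩⟩
    rwa [hb.basis_apply] at this
  · rw [hb.pow_apply_eq_zero, map_zero, sub_self, mul_zero, Int.cast_zero, zero_smul]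
  · rw [hb.pow_apply_eq_zero_of_le hgt.le, hb.pow_apply_eq_zero_of_le (by omega), map_zero,
      smul_zero]

attribute [local instance] LieRing.ofAssociativeRing

theorem lie_raisingMap (hb : IsJordanBasis N b g) : ⁅raisingMap N b g, N⁆ = weightMap b := by
  refine hb.end_ext fun i k => ?_
  have hXN : raisingMap N b g (N ((N ^ k) (g i))) =
      (((k + 1) * (d i - (k + 1)) : ℤ) : R) • (N ^ k) (g i) := by
    rw [← Module.End.mul_apply N, ← pow_succ', hb.raisingMap_pow_apply, add_tsub_cancel_right,
      Nat.cast_succ]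
  have hNX : N (raisingMap N b g ((N ^ k) (g i))) =
      ((k * (d i - k) : ℤ) : R) • (N ^ k) (g i) := by
    rw [hb.raisingMap_pow_apply, map_smul]
    rcases k with _ | k
    · simp
    · rw [add_tsub_cancel_right, ← Module.End.mul_apply, ← pow_succ']
  rw [LieRing.of_associative_ring_bracket, LinearMap.sub_apply, Module.End.mul_apply,
    Module.End.mul_apply, hXN, hNX, hb.weightMap_pow_apply, ← sub_smul, ← Int.cast_sub]
  congr 2
  ring

theorem lie_weightMap_raisingMap (hb : IsJordanBasis N b g) :
    ⁅weightMap b, raisingMap N b g⁆ = 2 • raisingMap N b g := by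
  refine hb.end_ext fun i k => ?_
  rw [LieRing.of_associative_ring_bracket, LinearMap.sub_apply, Module.End.mul_apply,
    Module.End.mul_apply, LinearMap.smul_apply, hb.weightMap_pow_apply, map_smul,
    hb.raisingMap_pow_apply, map_smul, hb.weightMap_pow_apply]
  rcases k with _ | k
  · simp
  · rw [add_tsub_cancel_right]
    push_cast
    module

theorem lie_weightMap (hb : IsJordanBasis N b g) : ⁅weightMap b, N⁆ = -(2 • N) := by
  refine hb.end_ext fun i k => ?_
  rw [LieRing.of_associative_ring_bracket, LinearMap.sub_apply, Module.End.mul_apply,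
    Module.End.mul_apply, LinearMap.neg_apply, LinearMap.smul_apply, hb.weightMap_pow_apply,
    map_smul, ← Module.End.mul_apply N, ← pow_succ', hb.weightMap_pow_apply]
  push_cast
  module

theorem sl2Relations (hb : IsJordanBasis N b g) :
    Sl2Relations (weightMap b) (raisingMap N b g) N :=
  ⟨hb.lie_raisingMap, hb.lie_weightMap_raisingMap, hb.lie_weightMap⟩

theorem hasBoundedWeights_weightMap [IsDomain R] [CharZero R]
    (b : Module.Basis (Σ i, Fin (d i)) R M) {n : ℕ} (hd : ∀ i, d i ≤ n) :
    HasBoundedWeights (weightMap b) := by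
  refine .of_basis b (weightMap_basis b) (b := n) fun s => ?_
  have := hd s.1
  rw [abs_le]
  omega

end IsJordanBasis

attribute [local instance] LieRing.ofAssociativeRing in
theorem exists_sl2Relations_of_isNilpotent {F V : Type*} [Field F] [CharZero F] [AddCommGroup V]
    [Module F V] {N : Module.End F V} (hN : IsNilpotent N) :
    ∃ H X : Module.End F V, Sl2Relations H X N ∧ HasBoundedWeights H := by
  obtain ⟨n, hn⟩ := hN
  obtain ⟨ι, d, b, g, hb, hd⟩ := exists_isJordanBasis hn
  exact ⟨_, _, hb.sl2Relations, IsJordanBasis.hasBoundedWeights_weightMap b hd⟩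

section Derivation

variable {R M P ι : Type*} [CommRing R] [AddCommGroup M] [Module R M] [AddCommGroup P] [Module R P]
  [Fintype ι] [DecidableEq ι]

/-- The action of an endomorphism `g` on multilinear maps by the Leibniz rule:
`v ↦ ∑ₖ f (v₁, …, g vₖ, …, vₙ)`. -/
def leibnizMultilinearMap (f : MultilinearMap R (fun _ : ι => M) P) (g : Module.End R M) :
    MultilinearMap R (fun _ : ι => M) P :=
  ∑ k, f.compLinearMap (Function.update (fun _ => LinearMap.id) k g)

theorem leibnizMultilinearMap_apply (f : MultilinearMap R (fun _ : ι => M) P)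
    (g : Module.End R M) (v : ι → M) :
    leibnizMultilinearMap f g v = ∑ k, f (Function.update v k (g (v k))) := by
  rw [leibnizMultilinearMap, _root_.sum_apply]
  refine Finset.sum_congr rfl fun k _ => ?_
  rw [MultilinearMap.compLinearMap_apply]
  congr 1
  ext i
  rcases eq_or_ne i k with rfl | hik
  · simp
  · simp [hik]

theorem leibnizMultilinearMap_mul_sub_mul (f : MultilinearMap R (fun _ : ι => M) P)
    (g h : Module.End R M) :
    leibnizMultilinearMap f (g * h - h * g) =
      leibnizMultilinearMap (leibnizMultilinearMap f g) h -
        leibnizMultilinearMap (leibnizMultilinearMap f h) g := by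
  ext v
  simp only [_root_.sub_apply, leibnizMultilinearMap_apply]
  rw [Finset.sum_comm (f := fun k l => f (Function.update (Function.update v k (g (v k))) l
      (h (Function.update v k (g (v k)) l)))), ← Finset.sum_sub_distrib]
  refine Finset.sum_congr rfl fun k _ => ?_
  rw [← Finset.sum_sub_distrib, Finset.sum_eq_single k]
  · simp only [Function.update_self, Function.update_idem, LinearMap.sub_apply,
      Module.End.mul_apply, MultilinearMap.map_update_sub]
  · intro l _ hl
    rw [Function.update_of_ne hl, Function.update_of_ne hl.symm, Function.update_comm hl, sub_self]
  · simp

theorem leibnizMultilinearMap_eq_zero_of_eq (f : M [⋀^ι]→ₗ[R] P) (g : Module.End R M) {v : ι → M}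
    {a b : ι} (hab : v a = v b) (hne : a ≠ b) :
    leibnizMultilinearMap f.toMultilinearMap g v = 0 := by
  have hswap : Function.update v b (g (v b)) =
      Function.update v a (g (v a)) ∘ Equiv.swap a b := by
    ext i
    rcases eq_or_ne i b with rfl | hib
    · simp [hab]
    rcases eq_or_ne i a with rfl | hia
    · simp [hne, hne.symm, hab]
    · simp [hia, hib, Equiv.swap_apply_of_ne_of_ne hia hib]
  have hpair : f (Function.update v a (g (v a))) + f (Function.update v b (g (v b))) = 0 := by
    rw [hswap, f.map_swap _ hne, add_neg_cancel]
  rw [leibnizMultilinearMap_apply, Fintype.sum_eq_add a b hne, ← hpair]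
  · rfl
  · rintro k ⟨hka, hkb⟩
    exact f.map_eq_zero_of_eq _ (by simp [hka.symm, hkb.symm, hab]) hne

/-- The action of an endomorphism on alternating maps by the Leibniz rule. -/
def leibnizAlternatingMap (f : M [⋀^ι]→ₗ[R] P) (g : Module.End R M) : M [⋀^ι]→ₗ[R] P where
  toMultilinearMap := leibnizMultilinearMap f.toMultilinearMap g
  map_eq_zero_of_eq' _ _ _ hab hne := leibnizMultilinearMap_eq_zero_of_eq f g hab hne

theorem leibnizAlternatingMap_apply (f : M [⋀^ι]→ₗ[R] P) (g : Module.End R M) (v : ι → M) :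
    leibnizAlternatingMap f g v = ∑ k, f (Function.update v k (g (v k))) :=
  leibnizMultilinearMap_apply f.toMultilinearMap g v

attribute [local instance] LieRing.ofAssociativeRing

/-- The representation of `Module.End R M` on `⋀[R]^n M` by the Leibniz rule. In the notation of
the theorem, `exteriorPowerDerivation F V j N` is `N^{(∧j)}`. -/
noncomputable def exteriorPowerDerivation (R M : Type*) [CommRing R] [AddCommGroup M] [Module R M]
    (n : ℕ) : Module.End R M →ₗ⁅R⁆ Module.End R (⋀[R]^n M) where
  toFun g := exteriorPower.alternatingMapLinearEquiv
    (leibnizAlternatingMap (exteriorPower.ιMulti R n) g)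
  map_add' g h := by
    ext v
    simp [leibnizAlternatingMap_apply, Finset.sum_add_distrib]
  map_smul' a g := by
    ext v
    simp [leibnizAlternatingMap_apply, Finset.smul_sum]
  map_lie' {g h} := by
    refine exteriorPower.linearMap_ext (AlternatingMap.ext fun v => ?_)
    have := DFunLike.congr_fun (leibnizMultilinearMap_mul_sub_mul
      (exteriorPower.ιMulti R n).toMultilinearMap g h) v
    simp only [_root_.sub_apply, leibnizMultilinearMap_apply] at this
    simpa [leibnizAlternatingMap_apply, LieRing.of_associative_ring_bracket] using this

theorem exteriorPowerDerivation_ιMulti (n : ℕ) (g : Module.End R M) (v : Fin n → M) :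
    exteriorPowerDerivation R M n g (exteriorPower.ιMulti R n v) =
      ∑ k, exteriorPower.ιMulti R n (Function.update v k (g (v k))) :=
  (exteriorPower.alternatingMapLinearEquiv_apply_ιMulti _ v).trans
    (leibnizAlternatingMap_apply _ g v)

end Derivation

theorem multilinearMap_apply_mem_of_mem_iSup {R ι P : Type*} {M κ : ι → Type*} [CommRing R]
    [Finite ι] [∀ i, AddCommGroup (M i)] [∀ i, Module R (M i)] [AddCommGroup P] [Module R P]
    (f : MultilinearMap R M P) {p : ∀ i, κ i → Submodule R (M i)} {Q : Submodule R P}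
    (hQ : ∀ (r : ∀ i, κ i) (u : ∀ i, M i), (∀ i, u i ∈ p i (r i)) → f u ∈ Q) {v : ∀ i, M i}
    (hv : ∀ i, v i ∈ ⨆ m, p i m) : f v ∈ Q := by
  classical
  have := Fintype.ofFinite ι
  choose x hx hxv using fun i => (Submodule.mem_iSup_iff_exists_finsupp _ _).1 (hv i)
  obtain rfl : (fun i => ∑ m ∈ (x i).support, x i m) = v := funext hxv
  rw [f.map_sum_finset]
  exact Submodule.sum_mem _ fun r _ => hQ r _ fun i => hx i (r i)

section ExtPowerFiltration

variable {F V : Type*} [Field F] [AddCommGroup V] [Module F V] {j : ℕ} {W : ℤ → Submodule F V}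
  {i : ℤ}

theorem wedge_eq_ιMulti (v : Fin j → V) : wedge F j v = exteriorPower.ιMulti F j v := rfl

theorem extPowerFiltration_le {Q : Submodule F (⋀[F]^j V)}
    (h : ∀ (c : Fin j → ℤ) (v : Fin j → V), ∑ k, c k = i → (∀ k, v k ∈ W (c k)) →
      wedge F j v ∈ Q) : extPowerFiltration F j W i ≤ Q := by
  refine iSup_le fun c => Submodule.span_le.2 ?_
  rintro _ ⟨v, hv, rfl⟩
  exact h c v c.2 hv

theorem wedge_mem_extPowerFiltration {c : Fin j → ℤ} {v : Fin j → V} (hv : ∀ k, v k ∈ W (c k)) :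
    wedge F j v ∈ extPowerFiltration F j W (∑ k, c k) :=
  Submodule.mem_iSup_of_mem ⟨c, rfl⟩ (Submodule.subset_span ⟨v, hv, rfl⟩)

theorem wedge_mem_extPowerFiltration_of_sum_le (hj : 0 < j) (hW : Monotone W) {c : Fin j → ℤ}
    {v : Fin j → V} (hc : ∑ k, c k ≤ i) (hv : ∀ k, v k ∈ W (c k)) :
    wedge F j v ∈ extPowerFiltration F j W i := by
  let e : Fin j → ℤ := Pi.single ⟨0, hj⟩ (i - ∑ k, c k)
  have hsum : ∑ k, (c k + e k) = i := by
    rw [Finset.sum_add_distrib, Finset.sum_pi_single', if_pos (Finset.mem_univ _), add_sub_cancel]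
  have he : 0 ≤ e := Pi.single_nonneg.2 (sub_nonneg.2 hc)
  rw [← hsum]
  exact wedge_mem_extPowerFiltration fun k => hW (le_add_of_nonneg_right (he k)) (hv k)

variable {H : Module.End F V}

theorem wedge_mem_weightSpace {c : Fin j → ℤ} {v : Fin j → V}
    (hv : ∀ k, v k ∈ weightSpace H (c k)) :
    wedge F j v ∈ weightSpace (exteriorPowerDerivation F V j H) (∑ k, c k) := by
  rw [mem_weightSpace, wedge_eq_ιMulti, exteriorPowerDerivation_ιMulti, Int.cast_sum,
    Finset.sum_smul]
  refine Finset.sum_congr rfl fun k _ => ?_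
  rw [mem_weightSpace.1 (hv k), AlternatingMap.map_update_smul, Function.update_eq_self]

theorem extPowerFiltration_weightSpace_le (m : ℤ) :
    extPowerFiltration F j (weightSpace H) m ≤
      weightSpace (exteriorPowerDerivation F V j H) m :=
  extPowerFiltration_le fun _ _ hc hv => hc ▸ wedge_mem_weightSpace hv

theorem iSup_extPowerFiltration_eq_top (hW : ⨆ m, W m = ⊤) :
    ⨆ m, extPowerFiltration F j W m = ⊤ := by
  rw [eq_top_iff, ← exteriorPower.ιMulti_span, Submodule.span_le]
  rintro _ ⟨v, rfl⟩
  exact multilinearMap_apply_mem_of_mem_iSup (exteriorPower.ιMulti F j).toMultilinearMap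
    (fun _ _ hu => Submodule.mem_iSup_of_mem _ (wedge_mem_extPowerFiltration hu))
    fun k => hW ▸ Submodule.mem_top

theorem extPowerFiltration_eq_bot {b : ℤ} (hW : ∀ m, b < |m| → W m = ⊥) (hi : j * b < |i|) :
    extPowerFiltration F j W i = ⊥ := by
  refine eq_bot_iff.2 (extPowerFiltration_le fun c v hc hv => ?_)
  obtain ⟨k, -, hk⟩ : ∃ k ∈ Finset.univ, b < |c k| := by
    refine Finset.exists_lt_of_sum_lt ?_
    calc ∑ _ : Fin j, b = j * b := by simp
      _ < |∑ k, c k| := hc ▸ hi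
      _ ≤ ∑ k, |c k| := Finset.abs_sum_le_sum_abs _ _
  have hvk : v k = 0 := by simpa [hW _ hk] using hv k
  exact (Submodule.mem_bot F).2 ((exteriorPower.ιMulti F j).map_coord_zero k hvk)

variable [CharZero F]

theorem extPowerFiltration_weightSpace (hH : ⨆ m, weightSpace H m = ⊤) :
    extPowerFiltration F j (weightSpace H) = weightSpace (exteriorPowerDerivation F V j H) :=
  eq_weightSpace_of_le extPowerFiltration_weightSpace_le (iSup_extPowerFiltration_eq_top hH)

theorem HasBoundedWeights.exteriorPowerDerivation (hH : HasBoundedWeights H) (j : ℕ) :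
    HasBoundedWeights (exteriorPowerDerivation F V j H) := by
  obtain ⟨b, hb⟩ := hH.exists_bound
  exact .of_le extPowerFiltration_weightSpace_le
    (iSup_extPowerFiltration_eq_top hH.iSup_weightSpace) fun _ => extPowerFiltration_eq_bot hb

theorem extPowerFiltration_weightSpaceFiltration (hj : 0 < j) (hH : ⨆ m, weightSpace H m = ⊤)
    (w : ℤ) : extPowerFiltration F j (weightSpaceFiltration H w) =
      weightSpaceFiltration (exteriorPowerDerivation F V j H) (w * j) := by
  have sum_add (c : Fin j → ℤ) : ∑ k, (w + c k) = w * j + ∑ k, c k := by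
    simp [Finset.sum_add_distrib, mul_comm]
  funext i
  apply le_antisymm
  · refine extPowerFiltration_le fun c v hc hv => ?_
    refine multilinearMap_apply_mem_of_mem_iSup (exteriorPower.ιMulti F j).toMultilinearMap
      (p := fun k (m : Set.Iic (c k - w)) => weightSpace H m) (fun r u hu => ?_) hv
    refine weightSpace_le_weightSpaceFiltration ?_ (wedge_mem_weightSpace hu)
    rw [← sum_add, ← hc]
    exact Finset.sum_le_sum fun k _ => le_sub_iff_add_le'.1 (r k).2
  · refine weightSpaceFiltration_le fun m hm => ?_
    rw [← extPowerFiltration_weightSpace hH]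
    refine extPowerFiltration_le fun c v hc hv => ?_
    refine wedge_mem_extPowerFiltration_of_sum_le hj (monotone_weightSpaceFiltration H w)
      (c := fun k => w + c k) (by rwa [sum_add, hc]) fun k => ?_
    exact weightSpace_le_weightSpaceFiltration le_rfl (hv k)

end ExtPowerFiltration

attribute [local instance] LieRing.ofAssociativeRing in
theorem weightFiltration_exteriorPower_general
    (F V : Type*) [Field F] [CharZero F] [AddCommGroup V] [Module F V]
    (N : V →ₗ[F] V) (w : ℤ) (W : ℤ → Submodule F V)
    (hW : IsWeightFiltration N w W)
    (j : ℕ) (hj : 0 < j)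
    (D : ⋀[F]^j V →ₗ[F] ⋀[F]^j V)
    (hD : ∀ v : Fin j → V,
      D (wedge F j v) = ∑ k : Fin j, wedge F j (Function.update v k (N (v k)))) :
    IsNilpotent D ∧
      IsWeightFiltration D (w * j) (extPowerFiltration F j W) := by
  obtain ⟨H, X, triple, hH⟩ := exists_sl2Relations_of_isNilpotent hW.isNilpotent
  have hW_eq : W = weightSpaceFiltration H w := hW.unique (triple.isWeightFiltration hH w)
  have hD_eq : D = exteriorPowerDerivation F V j N :=
    exteriorPower.linearMap_ext <| AlternatingMap.ext fun v =>
      (hD v).trans (exteriorPowerDerivation_ιMulti j N v).symm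
  have hwt : IsWeightFiltration D (w * j) (extPowerFiltration F j W) := by
    rw [hW_eq, hD_eq, extPowerFiltration_weightSpaceFiltration hj hH.iSup_weightSpace]
    exact (triple.map (exteriorPowerDerivation F V j)).isWeightFiltration
      (hH.exteriorPowerDerivation j) (w * j)
  exact ⟨hwt.isNilpotent, hwt⟩

/-- Let `W` be the weight filtration centered at `w` associated to a nilpotent endomorphism
`N` of a finite dimensional vector space `V` over a field of characteristic zero, and for
an integer `j > 0` let `N^{(∧j)}` be the unique endomorphism `D` of `⋀^j V` with
`D (v₁ ∧ ⋯ ∧ v_j) = Σ_k v₁ ∧ ⋯ ∧ N v_k ∧ ⋯ ∧ v_j`. Then `N^{(∧j)}` is nilpotent and the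
weight filtration on `⋀^j V` centered at `w · j` associated to `N^{(∧j)}` is the exterior
power filtration `∧^j W`. -/
theorem weightFiltration_exteriorPower
    (F V : Type*) [Field F] [CharZero F] [AddCommGroup V] [Module F V]
    [FiniteDimensional F V]
    (N : V →ₗ[F] V) (hN : IsNilpotent N) (w : ℤ) (W : ℤ → Submodule F V)
    (hW : IsWeightFiltration N w W)
    (j : ℕ) (hj : 0 < j)
    (D : ⋀[F]^j V →ₗ[F] ⋀[F]^j V)
    (hD : ∀ v : Fin j → V,
      D (wedge F j v) = ∑ k : Fin j, wedge F j (Function.update v k (N (v k)))) :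
    IsNilpotent D ∧
      IsWeightFiltration D (w * j) (extPowerFiltration F j W) :=
  weightFiltration_exteriorPower_general F V N w W hW j hj D hD
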